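/- Let K satisfy Assumption A, let T > 0, and let f be a mass-conserving weak solution of the coagulation equation on [0,T] with kernel K and initial datum f_in. Let x₁, x₂ ∈ (0,∞) with x₁ < x₂ and η₀ ∈ (0, min(1, x₁)) be such that x₂ − x₁ ≥ 3η₀ and f_in(B(x₁, η₀/2)) > 0, f_in(B(x₂, η₀/2)) > 0. Then for every t ∈ (0,T] there exists a constant C(t,x₁,x₂,η₀) > 0 such that ∫_{B(x₁+x₂, 5η₀/2)} f(dv,t) ≥ C(t,x₁,x₂,η₀). -/

import Mathlib

open MeasureTheory Set Filter

noncomputable section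

/-- Assumption A on the coagulation kernel `K(v,v') = h(v,v') g(v/(v+v'))`. -/
structure KernelAssumptionA (K : ℝ → ℝ → ℝ) (h : ℝ → ℝ → ℝ) (g : ℝ → ℝ)
    (γ H H₀ H₁ G₀ G₁ k : ℝ) : Prop where
  K_nonneg : ∀ v v', 0 ≤ v → 0 ≤ v' → 0 ≤ K v v'
  K_eq : ∀ v v', 0 ≤ v → 0 ≤ v' → 0 < v + v' →
      K v v' = h v v' * g (v / (v + v'))
  h_cont : ContinuousOn (fun p : ℝ × ℝ => h p.1 p.2) (Ici 0 ×ˢ Ici 0)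
  h_symm : ∀ v v', h v v' = h v' v
  γ_gt_one : 1 < γ
  H_gt_one : 1 < H
  H₀_pos : 0 < H₀
  h_lower : ∀ v v', 0 ≤ v → 0 ≤ v' → H < v + v' →
      H₀ * (v ^ γ + v' ^ γ) ≤ h v v'
  h_posOn : ∀ R : ℝ, 0 < R → ∃ C : ℝ, 0 < C ∧
      ∀ v ∈ Icc (1 / R) R, ∀ v' ∈ Icc (1 / R) R, C ≤ h v v'
  H₁_pos : 0 < H₁
  h_upper : ∀ v v', 0 ≤ v → 0 ≤ v' → h v v' ≤ H₁ * (v ^ γ + v' ^ γ)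
  g_cont : ContinuousOn g (Icc 0 1)
  g_symm : ∀ x ∈ Icc (0 : ℝ) 1, g x = g (1 - x)
  g_half : g (1 / 2) = 0
  G₀_pos : 0 < G₀
  G₁_pos : 0 < G₁
  k_ge_one : 1 ≤ k
  g_lower : ∀ x ∈ Icc (0 : ℝ) 1, G₀ * |x - 1 / 2| ^ k ≤ g x
  g_upper : ∀ x ∈ Icc (0 : ℝ) 1, g x ≤ G₁

/-- Weak solution of the coagulation equation on `[0, T]` with kernel `K`
and initial datum `fin`, in the sense of measures on `(0,∞)`. -/
structure IsWeakSolution (K : ℝ → ℝ → ℝ) (γ T : ℝ)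
    (f : ℝ → Measure ℝ) (fin : Measure ℝ) : Prop where
  conc : ∀ t ∈ Icc (0 : ℝ) T, f t (Iic 0) = 0
  time_cont : ∀ φ : ℝ → ℝ, Continuous φ → (∃ M : ℝ, ∀ v, |φ v| ≤ M) →
      ContinuousOn (fun t => ∫ v, φ v ∂(f t)) (Icc (0 : ℝ) T)
  moment_bound : ∃ C : ℝ, ∀ t ∈ Icc (0 : ℝ) T,
      Integrable (fun v => 1 + v ^ γ) (f t) ∧ (∫ v, (1 + v ^ γ) ∂(f t)) ≤ C
  weak_form : ∀ φ : ℝ → ℝ, Continuous φ → HasCompactSupport φ →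
      tsupport φ ⊆ Ioi 0 → ∀ t ∈ Icc (0 : ℝ) T,
      (∫ v, φ v ∂(f t)) - (∫ v, φ v ∂fin) =
        (1 / 2) * ∫ s in (0 : ℝ)..t,
          (∫ v, (∫ v', K v v' * (φ (v + v') - φ v - φ v') ∂(f s)) ∂(f s))

/-- The solution conserves mass on `[0, T]`. -/
def IsMassConserving (T : ℝ) (f : ℝ → Measure ℝ) (fin : Measure ℝ) : Prop :=
  Integrable (fun v => v) fin ∧
    ∀ t ∈ Icc (0 : ℝ) T,
      Integrable (fun v => v) (f t) ∧ (∫ v, v ∂(f t)) = ∫ v, v ∂fin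

/-- `μ` is a single Dirac measure `M • δ_V` with `M, V ∈ (0,∞)`. -/
def IsSingleDirac (μ : Measure ℝ) : Prop :=
  ∃ M V : ℝ, 0 < M ∧ 0 < V ∧ μ = ENNReal.ofReal M • Measure.dirac V

/-!
The support of `f t` at a positive time contains `x + y` for all `x`, `y` in the support of the
initial datum with `K x y > 0`, which under Assumption A means `x ≠ y`. Let `φ` be a bump function
at `x + y`, and `a`, `b` bump functions at `x`, `y` such that `a v * b v' ≤ K v v' * φ (v + v')`.
The gain term of `∫ φ ∂f t` is then at least half of `(∫ a ∂f t) * (∫ b ∂f t)`, which is continuous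
in time and positive at time `0`. The loss term is at most a constant times `∫ φ ∂f t`, since the
moments are bounded and `φ` has compact support. By Grönwall's inequality `∫ φ ∂f t` cannot vanish
for `t > 0`.
-/

open scoped Topology BoundedContinuousFunction

section WeakMeasurability

variable {α Ω : Type*} [MeasurableSpace α] [MeasurableSpace Ω] {κ : α → Measure Ω}
  [∀ a, IsFiniteMeasure (κ a)]

lemma measurable_of_forall_measurable_integral [TopologicalSpace Ω] [HasOuterApproxClosed Ω]
    [BorelSpace Ω] (h : ∀ φ : Ω →ᵇ ℝ, Measurable fun a => ∫ ω, φ ω ∂κ a) : Measurable κ := by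
  have hlintegral (ψ : Ω →ᵇ NNReal) : Measurable fun a => ∫⁻ ω, ψ ω ∂κ a := by
    let φ : Ω →ᵇ ℝ := ⟨⟨fun ω => (ψ ω : ℝ), by fun_prop⟩, ψ.map_bounded'⟩
    have heq (a : α) : ∫⁻ ω, ψ ω ∂κ a = ENNReal.ofReal (∫ ω, φ ω ∂κ a) := by
      rw [← ENNReal.ofReal_toReal (ψ.lintegral_lt_top_of_nnreal (κ a)).ne,
        ψ.toReal_lintegral_coe_eq_integral]
      rfl
    simpa only [heq] using (h φ).ennreal_ofReal
  have hclosed (F : Set Ω) (hF : IsClosed F) : Measurable fun a => κ a F :=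
    measurable_of_tendsto_metrizable (fun n => hlintegral (hF.apprSeq n))
      (tendsto_pi_nhds.2 fun a => HasOuterApproxClosed.tendsto_lintegral_apprSeq hF (κ a))
  exact .measure_of_isPiSystem (BorelSpace.measurable_eq.trans borel_eq_generateFrom_isClosed)
    isPiSystem_isClosed hclosed (hclosed univ isClosed_univ)

lemma stronglyMeasurable_integral_prod_self (hκ : Measurable κ) {F : Ω × Ω → ℝ}
    (hF : StronglyMeasurable F) :
    StronglyMeasurable fun a => ∫ p, F p ∂(κ a).prod (κ a) := by
  have hprod : Measurable fun a => (κ a).prod (κ a) := by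
    have hκ' : Measurable fun a => (⟨κ a, inferInstance⟩ : FiniteMeasure Ω) := hκ.subtype_mk
    exact FiniteMeasure.measurable_fun_prod.comp (hκ'.prodMk hκ')
  exact hF.integral_kernel (κ := ⟨fun a => (κ a).prod (κ a), hprod⟩)

end WeakMeasurability

section Gronwall

variable {y p q : ℝ → ℝ} {a b L : ℝ}

lemma integral_eq_zero_of_le_mul_integral (hab : a ≤ b) (hy : ContinuousOn y (Icc a b))
    (hy_nonneg : ∀ s ∈ Icc a b, 0 ≤ y s)
    (hle : ∀ s ∈ Icc a b, y s ≤ L * ∫ r in s..b, y r) : ∫ r in a..b, y r = 0 := by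
  set Y : ℝ → ℝ := fun s => ∫ r in s..b, y r with hY
  have hY_nonneg (s) (hs : s ∈ Icc a b) : 0 ≤ Y s :=
    intervalIntegral.integral_nonneg hs.2 fun r hr => hy_nonneg r ⟨hs.1.trans hr.1, hr.2⟩
  have hY_cont : ContinuousOn Y (Icc a b) := by
    have hint : IntegrableOn y (uIcc a b) volume := uIcc_of_le hab ▸ hy.integrableOn_Icc
    simpa only [uIcc_of_le hab] using intervalIntegral.continuousOn_primitive_interval_left hint
  have hY_deriv (s) (hs : s ∈ Ioc a b) : HasDerivWithinAt Y (-y s) (Iic s) s := by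
    have hsub : Icc a b ∈ 𝓝[≤] s := Icc_mem_nhdsLE_of_mem hs
    exact intervalIntegral.integral_hasDerivWithinAt_left
      ((hy.mono (Icc_subset_Icc_left hs.1.le)).intervalIntegrable_of_Icc hs.2)
      ⟨Icc a b, hsub, hy.aestronglyMeasurable measurableSet_Icc⟩
      ((hy s (Ioc_subset_Icc_self hs)).mono_of_mem_nhdsWithin hsub)
  have hmaps : MapsTo Neg.neg (Icc (-b) (-a)) (Icc a b) := fun s hs =>
    ⟨le_neg.2 hs.2, neg_le.2 hs.1⟩
  have := eq_zero_of_abs_deriv_le_mul_abs_self_of_eq_zero_right (f := fun s => Y (-s))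
    (f' := fun s => y (-s)) (K := L) (hY_cont.comp continuousOn_neg hmaps) ?_ (by simp [hY]) ?_
    (-a) (right_mem_Icc.2 (neg_le_neg hab))
  · simpa only [neg_neg] using this
  · intro s hs
    have hd := (hY_deriv (-s) ⟨lt_neg.2 hs.2, neg_le.2 hs.1⟩).scomp s
      (hasDerivAt_neg s).hasDerivWithinAt (s := Ici s) fun r hr =>
        mem_Iic.2 (neg_le_neg (mem_Ici.1 hr))
    simpa only [Function.comp_def, neg_smul, one_smul, neg_neg] using hd
  · intro s hs
    have hs' : -s ∈ Icc a b := hmaps (Ico_subset_Icc_self hs)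
    simpa only [Real.norm_of_nonneg (hy_nonneg _ hs'), Real.norm_of_nonneg (hY_nonneg _ hs')]
      using hle _ hs'

lemma pos_of_le_add_mul_integral (hab : a ≤ b) (hy : ContinuousOn y (Icc a b))
    (hy_nonneg : ∀ s ∈ Icc a b, 0 ≤ y s)
    (hle : ∀ s ∈ Icc a b, y s ≤ y b + L * ∫ r in s..b, y r)
    (hlt : y a < y b + L * ∫ r in a..b, y r) : 0 < y b := by
  by_contra! hyb
  have hyb : y b = 0 := le_antisymm hyb (hy_nonneg b (right_mem_Icc.2 hab))
  simp only [hyb, zero_add] at hle hlt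
  rw [integral_eq_zero_of_le_mul_integral hab hy hy_nonneg hle, mul_zero] at hlt
  exact hlt.not_ge (hy_nonneg a (left_mem_Icc.2 hab))

lemma pos_of_sub_mul_le_deriv (hab : a < b) (hy : ContinuousOn y (Icc a b))
    (hy_nonneg : ∀ s ∈ Icc a b, 0 ≤ y s) (hq : IntegrableOn q (Icc a b))
    (hyq : ∀ s ∈ Icc a b, y b - y s = ∫ r in s..b, q r) (hp : ContinuousOn p (Icc a b))
    (hp_nonneg : ∀ s ∈ Icc a b, 0 ≤ p s) (hpa : 0 < p a)
    (hpq : ∀ s ∈ Icc a b, p s - L * y s ≤ q s) : 0 < y b := by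
  have hle (s) (hs : s ∈ Icc a b) : y s + ∫ r in s..b, p r ≤ y b + L * ∫ r in s..b, y r := by
    have hsub : Icc s b ⊆ Icc a b := Icc_subset_Icc_left hs.1
    have hy_int := (hy.mono hsub).intervalIntegrable_of_Icc (μ := volume) hs.2
    have hp_int := (hp.mono hsub).intervalIntegrable_of_Icc (μ := volume) hs.2
    have hq_int : IntervalIntegrable q volume s b :=
      (hq.mono_set (uIcc_of_le hs.2 ▸ hsub)).intervalIntegrable
    have := intervalIntegral.integral_mono_on hs.2 (hp_int.sub (hy_int.const_mul L)) hq_int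
      fun r hr => hpq r (hsub hr)
    rw [intervalIntegral.integral_sub hp_int (hy_int.const_mul L),
      intervalIntegral.integral_const_mul, ← hyq s hs] at this
    linarith
  refine pos_of_le_add_mul_integral (L := L) hab.le hy hy_nonneg (fun s hs => ?_) ?_
  · have := intervalIntegral.integral_nonneg (μ := volume) hs.2
      fun r hr => hp_nonneg r ⟨hs.1.trans hr.1, hr.2⟩
    linarith [hle s hs]
  · have := intervalIntegral.integral_pos hab hp (fun r hr => hp_nonneg r (Ioc_subset_Icc_self hr))
      ⟨a, left_mem_Icc.2 hab.le, hpa⟩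
    linarith [hle a (left_mem_Icc.2 hab.le)]

end Gronwall

section MomentWeight

/-- The weight `1 + v ^ γ` of the moment condition on weak solutions. -/
def momentWeight (γ v : ℝ) : ℝ := 1 + v ^ γ

variable {γ v : ℝ}

lemma one_le_momentWeight (hv : 0 < v) : 1 ≤ momentWeight γ v :=
  le_add_of_nonneg_right (Real.rpow_nonneg hv.le γ)

lemma continuousOn_momentWeight : ContinuousOn (momentWeight γ) (Ioi 0) :=
  continuousOn_const.add (continuousOn_id.rpow_const fun _ hv => .inl (ne_of_gt hv))

lemma isFiniteMeasure_of_integrable_momentWeight {μ : Measure ℝ} (hμ : ∀ᵐ v ∂μ, 0 < v)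
    (hint : Integrable (momentWeight γ) μ) : IsFiniteMeasure μ := by
  refine ⟨lt_of_le_of_lt (measure_mono_ae ?_) (hint.measure_ge_lt_top one_pos)⟩
  filter_upwards [hμ] with v hv _ using one_le_momentWeight hv

end MomentWeight

section TestFunctions

/-- The test functions of the weak formulation: continuous, with compact support in `(0, ∞)`. -/
structure IsTestFunction (φ : ℝ → ℝ) : Prop where
  continuous : Continuous φ
  hasCompactSupport : HasCompactSupport φ
  tsupport_subset : tsupport φ ⊆ Ioi 0

namespace IsTestFunction

variable {φ : ℝ → ℝ}

lemma exists_abs_le (hφ : IsTestFunction φ) : ∃ M, ∀ v, |φ v| ≤ M :=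
  hφ.hasCompactSupport.exists_bound_of_continuous hφ.continuous

lemma integrable (hφ : IsTestFunction φ) (μ : Measure ℝ) [IsLocallyFiniteMeasure μ] :
    Integrable φ μ :=
  hφ.continuous.integrable_of_hasCompactSupport hφ.hasCompactSupport

lemma const_mul (hφ : IsTestFunction φ) (c : ℝ) : IsTestFunction fun v => c * φ v where
  continuous := hφ.continuous.const_mul c
  hasCompactSupport := hφ.hasCompactSupport.mul_left
  tsupport_subset := (tsupport_mul_subset_right).trans hφ.tsupport_subset

lemma exists_mul_le_mul (hφ : IsTestFunction φ) (hφ_nonneg : 0 ≤ φ) {w : ℝ → ℝ}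
    (hw : ContinuousOn w (Ioi 0)) : ∃ W, 0 ≤ W ∧ ∀ v, w v * φ v ≤ W * φ v := by
  obtain ⟨W, hW⟩ := hφ.hasCompactSupport.isCompact.exists_bound_of_continuousOn
    (hw.mono hφ.tsupport_subset)
  refine ⟨|W|, abs_nonneg W, fun v => ?_⟩
  by_cases hv : v ∈ tsupport φ
  · exact mul_le_mul_of_nonneg_right
      ((le_abs_self _).trans ((hW v hv).trans (le_abs_self W))) (hφ_nonneg v)
  · simp only [image_eq_zero_of_notMem_tsupport hv, mul_zero, le_refl]

end IsTestFunction

lemma exists_isTestFunction {x : ℝ} {U : Set ℝ} (hx : 0 < x) (hU : U ∈ 𝓝 x) :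
    ∃ φ, IsTestFunction φ ∧ (∀ v, φ v ∈ Icc 0 1) ∧ tsupport φ ⊆ U ∧ φ x = 1 := by
  obtain ⟨φ, hsupp, hcomp, hφ, hrange, hφx⟩ :=
    exists_contDiff_tsupport_subset (n := 0) (inter_mem hU (Ioi_mem_nhds hx))
  exact ⟨φ, ⟨hφ.continuous, hcomp, hsupp.trans inter_subset_right⟩,
    fun v => hrange (mem_range_self v), hsupp.trans inter_subset_left, hφx⟩

end TestFunctions

lemma integral_pos_of_mem_support {X : Type*} [TopologicalSpace X] [MeasurableSpace X]
    {μ : Measure X} {φ : X → ℝ} {x : X} (hφ : Continuous φ) (hφ_nonneg : 0 ≤ φ)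
    (hint : Integrable φ μ) (hx : x ∈ μ.support) (hφx : 0 < φ x) : 0 < ∫ v, φ v ∂μ :=
  (integral_pos_iff_support_of_nonneg hφ_nonneg hint).2 <|
    (Measure.mem_support_iff_forall x).1 hx _ (hφ.isOpen_support.mem_nhds hφx.ne')

section CoagulationForm

/-- A coagulation kernel which is continuous and nonnegative on `(0, ∞)²` and dominated there by
`B * (w ⊗ w)` for a continuous weight `w ≥ 1`, so that `w`-moments control the coagulation
operator. -/
structure IsDominatedKernel (K : ℝ → ℝ → ℝ) (w : ℝ → ℝ) (B : ℝ) : Prop where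
  continuousOn : ContinuousOn (fun p : ℝ × ℝ => K p.1 p.2) (Ioi 0 ×ˢ Ioi 0)
  nonneg : ∀ v v', 0 < v → 0 < v' → 0 ≤ K v v'
  le_mul : ∀ v v', 0 < v → 0 < v' → K v v' ≤ B * (w v * w v')
  weight_continuousOn : ContinuousOn w (Ioi 0)
  one_le_weight : ∀ v, 0 < v → 1 ≤ w v

/-- The effect on the observable `φ` of the collisions of a pair of particles of sizes `p.1` and
`p.2`: a particle of size `p.1 + p.2` is gained, one of each size `p.1`, `p.2` is lost. -/
def coagulationIntegrand (K : ℝ → ℝ → ℝ) (φ : ℝ → ℝ) (p : ℝ × ℝ) : ℝ :=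
  K p.1 p.2 * (φ (p.1 + p.2) - φ p.1 - φ p.2)

/-- The weak form of the coagulation operator at `μ`, tested with `φ`, without its factor `1 / 2`.
It is an integral over the product measure, not an iterated one, so that it can be estimated by
a single domination. -/
def coagulationForm (K : ℝ → ℝ → ℝ) (φ : ℝ → ℝ) (μ : Measure ℝ) : ℝ :=
  ∫ p, coagulationIntegrand K φ p ∂μ.prod μ

lemma ae_prod_pos {μ : Measure ℝ} [SFinite μ] (hμ : ∀ᵐ v ∂μ, 0 < v) :
    ∀ᵐ p ∂μ.prod μ, p ∈ Ioi (0 : ℝ) ×ˢ Ioi (0 : ℝ) :=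
  (Measure.quasiMeasurePreserving_fst.ae hμ).and (Measure.quasiMeasurePreserving_snd.ae hμ)

namespace IsDominatedKernel

variable {K : ℝ → ℝ → ℝ} {w φ : ℝ → ℝ} {B M : ℝ} {μ : Measure ℝ}

lemma bound_nonneg (hK : IsDominatedKernel K w B) : 0 ≤ B := by
  have hw : 0 < w 1 := one_pos.trans_le (hK.one_le_weight 1 one_pos)
  exact nonneg_of_mul_nonneg_left
    ((hK.nonneg 1 1 one_pos one_pos).trans (hK.le_mul 1 1 one_pos one_pos)) (mul_pos hw hw)

lemma continuousOn_coagulationIntegrand (hK : IsDominatedKernel K w B) (hφ : Continuous φ) :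
    ContinuousOn (coagulationIntegrand K φ) (Ioi 0 ×ˢ Ioi 0) :=
  hK.continuousOn.mul (Continuous.continuousOn (by fun_prop))

lemma abs_coagulationIntegrand_le (hK : IsDominatedKernel K w B) (hM : ∀ v, |φ v| ≤ M)
    {p : ℝ × ℝ} (hp : p ∈ Ioi (0 : ℝ) ×ˢ Ioi (0 : ℝ)) :
    |coagulationIntegrand K φ p| ≤ 3 * M * B * (w p.1 * w p.2) := by
  have hK_nonneg := hK.nonneg p.1 p.2 hp.1 hp.2
  have hφ : |φ (p.1 + p.2) - φ p.1 - φ p.2| ≤ 3 * M := by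
    have h := abs_sub (φ (p.1 + p.2) - φ p.1) (φ p.2)
    have h' := abs_sub (φ (p.1 + p.2)) (φ p.1)
    linarith [hM (p.1 + p.2), hM p.1, hM p.2]
  calc |coagulationIntegrand K φ p|
      = K p.1 p.2 * |φ (p.1 + p.2) - φ p.1 - φ p.2| := by
        rw [coagulationIntegrand, abs_mul, abs_of_nonneg hK_nonneg]
    _ ≤ B * (w p.1 * w p.2) * (3 * M) :=
        mul_le_mul (hK.le_mul p.1 p.2 hp.1 hp.2) hφ (abs_nonneg _)
          (hK_nonneg.trans (hK.le_mul p.1 p.2 hp.1 hp.2))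
    _ = 3 * M * B * (w p.1 * w p.2) := by ring

section SFinite

variable [SFinite μ]

lemma integrable_coagulationIntegrand (hK : IsDominatedKernel K w B) (hφ : Continuous φ)
    (hM : ∀ v, |φ v| ≤ M) (hμ : ∀ᵐ v ∂μ, 0 < v) (hw : Integrable w μ) :
    Integrable (coagulationIntegrand K φ) (μ.prod μ) := by
  have hmeas := (hK.continuousOn_coagulationIntegrand hφ).aestronglyMeasurable (μ := μ.prod μ)
    (measurableSet_Ioi.prod measurableSet_Ioi)
  rw [Measure.restrict_eq_self_of_ae_mem (ae_prod_pos hμ)] at hmeas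
  exact ((hw.mul_prod hw).const_mul (3 * M * B)).mono' hmeas
    ((ae_prod_pos hμ).mono fun p hp => hK.abs_coagulationIntegrand_le hM hp)

lemma coagulationForm_eq_integral_integral (hK : IsDominatedKernel K w B) (hφ : Continuous φ)
    (hM : ∀ v, |φ v| ≤ M) (hμ : ∀ᵐ v ∂μ, 0 < v) (hw : Integrable w μ) :
    coagulationForm K φ μ = ∫ v, ∫ v', K v v' * (φ (v + v') - φ v - φ v') ∂μ ∂μ :=
  integral_prod _ (hK.integrable_coagulationIntegrand hφ hM hμ hw)

lemma abs_coagulationForm_le (hK : IsDominatedKernel K w B) (hM : ∀ v, |φ v| ≤ M)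
    (hμ : ∀ᵐ v ∂μ, 0 < v) (hw : Integrable w μ) :
    |coagulationForm K φ μ| ≤ 3 * M * B * (∫ v, w v ∂μ) ^ 2 := by
  have h := norm_integral_le_of_norm_le (f := coagulationIntegrand K φ)
    ((hw.mul_prod hw).const_mul (3 * M * B))
    ((ae_prod_pos hμ).mono fun p hp => hK.abs_coagulationIntegrand_le hM hp)
  rwa [integral_const_mul, integral_prod_mul, ← sq] at h

end SFinite

lemma exists_loss_le (hK : IsDominatedKernel K w B) (hφ : IsTestFunction φ) (hφ_nonneg : 0 ≤ φ) :
    ∃ D, 0 ≤ D ∧ ∀ v v', 0 < v → 0 < v' →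
      K v v' * φ v ≤ D * (φ v * w v') ∧ K v v' * φ v' ≤ D * (w v * φ v') := by
  obtain ⟨W, hW, hwφ⟩ := hφ.exists_mul_le_mul hφ_nonneg hK.weight_continuousOn
  have hw_nonneg (v) (hv : 0 < v) : 0 ≤ B * w v :=
    mul_nonneg hK.bound_nonneg (zero_le_one.trans (hK.one_le_weight v hv))
  refine ⟨B * W, mul_nonneg hK.bound_nonneg hW, fun v v' hv hv' => ⟨?_, ?_⟩⟩
  · calc K v v' * φ v ≤ B * (w v * w v') * φ v :=
          mul_le_mul_of_nonneg_right (hK.le_mul v v' hv hv') (hφ_nonneg v)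
      _ = B * w v' * (w v * φ v) := by ring
      _ ≤ B * w v' * (W * φ v) := mul_le_mul_of_nonneg_left (hwφ v) (hw_nonneg v' hv')
      _ = B * W * (φ v * w v') := by ring
  · calc K v v' * φ v' ≤ B * (w v * w v') * φ v' :=
          mul_le_mul_of_nonneg_right (hK.le_mul v v' hv hv') (hφ_nonneg v')
      _ = B * w v * (w v' * φ v') := by ring
      _ ≤ B * w v * (W * φ v') := mul_le_mul_of_nonneg_left (hwφ v') (hw_nonneg v hv)
      _ = B * W * (w v * φ v') := by ring

lemma le_coagulationForm (hK : IsDominatedKernel K w B) {a b : ℝ → ℝ} {D : ℝ}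
    [IsLocallyFiniteMeasure μ] (hμ : ∀ᵐ v ∂μ, 0 < v) (hw : Integrable w μ) (ha : Integrable a μ)
    (hb : Integrable b μ) (hφ : IsTestFunction φ)
    (hgain : ∀ v v', 0 < v → 0 < v' → a v * b v' ≤ K v v' * φ (v + v'))
    (hloss : ∀ v v', 0 < v → 0 < v' →
      K v v' * φ v ≤ D * (φ v * w v') ∧ K v v' * φ v' ≤ D * (w v * φ v')) :
    (∫ v, a v ∂μ) * (∫ v, b v ∂μ) - 2 * D * (∫ v, w v ∂μ) * (∫ v, φ v ∂μ) ≤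
      coagulationForm K φ μ := by
  obtain ⟨M, hM⟩ := hφ.exists_abs_le
  have hφ_int := hφ.integrable μ
  have hab := ha.mul_prod hb
  have hφw := (hφ_int.mul_prod hw).const_mul D
  have hwφ := (hw.mul_prod hφ_int).const_mul D
  have hle := integral_mono_ae ((hab.sub hφw).sub hwφ)
    (hK.integrable_coagulationIntegrand hφ.continuous hM hμ hw) <|
    (ae_prod_pos hμ).mono fun p hp => by
      have hsplit : coagulationIntegrand K φ p =
          K p.1 p.2 * φ (p.1 + p.2) - K p.1 p.2 * φ p.1 - K p.1 p.2 * φ p.2 := by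
        rw [coagulationIntegrand]; ring
      obtain ⟨hloss₁, hloss₂⟩ := hloss p.1 p.2 hp.1 hp.2
      simp only [Pi.sub_apply]
      linarith [hgain p.1 p.2 hp.1 hp.2]
  rw [integral_sub' (hab.sub hφw) hwφ, integral_sub' hab hφw, integral_const_mul,
    integral_const_mul, integral_prod_mul, integral_prod_mul, integral_prod_mul] at hle
  rw [coagulationForm]
  linarith

lemma exists_mul_le_gain (hK : IsDominatedKernel K w B) (hφ : IsTestFunction φ)
    (hφ_nonneg : 0 ≤ φ) {x y : ℝ} (hx : 0 < x) (hy : 0 < y) (hKxy : 0 < K x y)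
    (hφxy : 0 < φ (x + y)) : ∃ a b : ℝ → ℝ, IsTestFunction a ∧ IsTestFunction b ∧ 0 ≤ a ∧ 0 ≤ b ∧
      0 < a x ∧ 0 < b y ∧ ∀ v v', 0 < v → 0 < v' → a v * b v' ≤ K v v' * φ (v + v') := by
  set gain : ℝ × ℝ → ℝ := fun p => K p.1 p.2 * φ (p.1 + p.2)
  have hφ_cont := hφ.continuous
  have hcont : ContinuousAt gain (x, y) :=
    (hK.continuousOn.mul (Continuous.continuousOn (by fun_prop))).continuousAt
      (prod_mem_nhds (Ioi_mem_nhds hx) (Ioi_mem_nhds hy))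
  obtain ⟨ε, hε, hεlt⟩ := exists_between (mul_pos hKxy hφxy : 0 < gain (x, y))
  obtain ⟨U, hU, V, hV, hUV⟩ := mem_nhds_prod_iff.1 (hcont.eventually (lt_mem_nhds hεlt))
  obtain ⟨a, ha, ha_mem, haU, hax⟩ := exists_isTestFunction hx hU
  obtain ⟨b, hb, hb_mem, hbV, hby⟩ := exists_isTestFunction hy hV
  refine ⟨fun v => ε * a v, b, ha.const_mul ε, hb, fun v => mul_nonneg hε.le (ha_mem v).1,
    fun v => (hb_mem v).1, by simpa only [hax, mul_one], by simp only [hby, one_pos],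
    fun v v' hv hv' => ?_⟩
  have hgain_nonneg : 0 ≤ K v v' * φ (v + v') := mul_nonneg (hK.nonneg v v' hv hv') (hφ_nonneg _)
  by_cases hmem : v ∈ tsupport a ∧ v' ∈ tsupport b
  · calc ε * a v * b v' = ε * (a v * b v') := mul_assoc _ _ _
      _ ≤ ε := mul_le_of_le_one_right hε.le
        (mul_le_one₀ (ha_mem v).2 (hb_mem v').1 (hb_mem v').2)
      _ ≤ K v v' * φ (v + v') := (hUV (mk_mem_prod (haU hmem.1) (hbV hmem.2))).le
  · rcases not_and_or.1 hmem with hv_notMem | hv'_notMem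
    · simpa only [image_eq_zero_of_notMem_tsupport hv_notMem, mul_zero, zero_mul]
    · simpa only [image_eq_zero_of_notMem_tsupport hv'_notMem, mul_zero]

end IsDominatedKernel

end CoagulationForm

lemma div_add_mem_Icc {v v' : ℝ} (hv : 0 < v) (hv' : 0 < v') : v / (v + v') ∈ Icc 0 1 :=
  ⟨by positivity, div_le_one_of_le₀ (by linarith) (by positivity)⟩

namespace KernelAssumptionA

variable {K h : ℝ → ℝ → ℝ} {g : ℝ → ℝ} {γ H H₀ H₁ G₀ G₁ k v v' : ℝ}

lemma g_nonneg (hK : KernelAssumptionA K h g γ H H₀ H₁ G₀ G₁ k) {x : ℝ} (hx : x ∈ Icc 0 1) :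
    0 ≤ g x :=
  (mul_nonneg hK.G₀_pos.le (Real.rpow_nonneg (abs_nonneg _) k)).trans (hK.g_lower x hx)

lemma g_pos_of_ne_half (hK : KernelAssumptionA K h g γ H H₀ H₁ G₀ G₁ k) {x : ℝ}
    (hx : x ∈ Icc 0 1) (hne : x ≠ 1 / 2) : 0 < g x :=
  (mul_pos hK.G₀_pos (Real.rpow_pos_of_pos (abs_pos.2 (sub_ne_zero.2 hne)) k)).trans_le
    (hK.g_lower x hx)

lemma h_pos (hK : KernelAssumptionA K h g γ H H₀ H₁ G₀ G₁ k) (hv : 0 < v) (hv' : 0 < v') :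
    0 < h v v' := by
  have hv_inv : 0 < 1 / v := one_div_pos.2 hv
  have hv'_inv : 0 < 1 / v' := one_div_pos.2 hv'
  have hR : 0 < v + v' + 1 / v + 1 / v' := by positivity
  obtain ⟨c, hc, hch⟩ := hK.h_posOn _ hR
  exact hc.trans_le (hch v ⟨(one_div_le hv hR).1 (by linarith), by linarith⟩
    v' ⟨(one_div_le hv' hR).1 (by linarith), by linarith⟩)

lemma pos_of_ne (hK : KernelAssumptionA K h g γ H H₀ H₁ G₀ G₁ k) (hv : 0 < v) (hv' : 0 < v')
    (hne : v ≠ v') : 0 < K v v' := by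
  have hsum : 0 < v + v' := add_pos hv hv'
  rw [hK.K_eq v v' hv.le hv'.le hsum]
  refine mul_pos (hK.h_pos hv hv')
    (hK.g_pos_of_ne_half (div_add_mem_Icc hv hv') fun hhalf => hne ?_)
  rw [div_eq_div_iff hsum.ne' two_ne_zero] at hhalf
  linarith

lemma le_momentWeight_mul (hK : KernelAssumptionA K h g γ H H₀ H₁ G₀ G₁ k) (hv : 0 < v)
    (hv' : 0 < v') : K v v' ≤ H₁ * G₁ * (momentWeight γ v * momentWeight γ v') := by
  have hvγ : 0 ≤ v ^ γ := Real.rpow_nonneg hv.le γ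
  have hv'γ : 0 ≤ v' ^ γ := Real.rpow_nonneg hv'.le γ
  have hmem := div_add_mem_Icc hv hv'
  have hH₁ := hK.H₁_pos
  have hG₁ := hK.G₁_pos
  calc K v v' = h v v' * g (v / (v + v')) := hK.K_eq v v' hv.le hv'.le (add_pos hv hv')
    _ ≤ H₁ * (v ^ γ + v' ^ γ) * G₁ :=
      mul_le_mul (hK.h_upper v v' hv.le hv'.le) (hK.g_upper _ hmem) (hK.g_nonneg hmem)
        (by positivity)
    _ = H₁ * G₁ * (v ^ γ + v' ^ γ) := by ring
    _ ≤ H₁ * G₁ * (momentWeight γ v * momentWeight γ v') := by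
      refine mul_le_mul_of_nonneg_left ?_ (by positivity)
      simp only [momentWeight]
      nlinarith [mul_nonneg hvγ hv'γ]

lemma continuousOn_kernel (hK : KernelAssumptionA K h g γ H H₀ H₁ G₀ G₁ k) :
    ContinuousOn (fun p : ℝ × ℝ => K p.1 p.2) (Ioi 0 ×ˢ Ioi 0) := by
  have hratio : ContinuousOn (fun p : ℝ × ℝ => p.1 / (p.1 + p.2)) (Ioi 0 ×ˢ Ioi 0) :=
    continuousOn_fst.div (continuousOn_fst.add continuousOn_snd)
      fun p hp => (add_pos (mem_Ioi.1 hp.1) (mem_Ioi.1 hp.2)).ne'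
  have hh := hK.h_cont.mono (prod_mono Ioi_subset_Ici_self Ioi_subset_Ici_self)
  refine (hh.mul (hK.g_cont.comp hratio fun p hp => div_add_mem_Icc hp.1 hp.2)).congr ?_
  exact fun p hp => hK.K_eq p.1 p.2 (le_of_lt hp.1) (le_of_lt hp.2) (add_pos hp.1 hp.2)

lemma isDominatedKernel (hK : KernelAssumptionA K h g γ H H₀ H₁ G₀ G₁ k) :
    IsDominatedKernel K (momentWeight γ) (H₁ * G₁) where
  continuousOn := hK.continuousOn_kernel
  nonneg v v' hv hv' := hK.K_nonneg v v' hv.le hv'.le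
  le_mul _ _ hv hv' := hK.le_momentWeight_mul hv hv'
  weight_continuousOn := continuousOn_momentWeight
  one_le_weight _ hv := one_le_momentWeight hv

end KernelAssumptionA

lemma ae_pos_of_measure_Iic_eq_zero {μ : Measure ℝ} (hμ : μ (Iic 0) = 0) : ∀ᵐ v ∂μ, 0 < v :=
  (measure_eq_zero_iff_ae_notMem.1 hμ).mono fun _ hv => not_le.1 hv

namespace IsWeakSolution

variable {K : ℝ → ℝ → ℝ} {φ : ℝ → ℝ} {γ B T s t : ℝ} {f : ℝ → Measure ℝ} {fin : Measure ℝ}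

lemma ae_pos (hf : IsWeakSolution K γ T f fin) (ht : t ∈ Icc 0 T) : ∀ᵐ v ∂f t, 0 < v :=
  ae_pos_of_measure_Iic_eq_zero (hf.conc t ht)

lemma integrable_momentWeight (hf : IsWeakSolution K γ T f fin) (ht : t ∈ Icc 0 T) :
    Integrable (momentWeight γ) (f t) :=
  (hf.moment_bound.choose_spec t ht).1

lemma isFiniteMeasure (hf : IsWeakSolution K γ T f fin) (ht : t ∈ Icc 0 T) :
    IsFiniteMeasure (f t) :=
  isFiniteMeasure_of_integrable_momentWeight (hf.ae_pos ht) (hf.integrable_momentWeight ht)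

lemma exists_integral_momentWeight_le (hf : IsWeakSolution K γ T f fin) :
    ∃ C, ∀ t ∈ Icc 0 T, ∫ v, momentWeight γ v ∂f t ∈ Icc 0 C := by
  obtain ⟨C, hC⟩ := hf.moment_bound
  refine ⟨C, fun t ht => ⟨integral_nonneg_of_ae ?_, (hC t ht).2⟩⟩
  exact (hf.ae_pos ht).mono fun v hv => zero_le_one.trans (one_le_momentWeight hv)

lemma continuousOn_integral (hf : IsWeakSolution K γ T f fin) (hφ : IsTestFunction φ) :
    ContinuousOn (fun t => ∫ v, φ v ∂f t) (Icc 0 T) :=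
  hf.time_cont φ hφ.continuous hφ.exists_abs_le

lemma measurable_restrict (hf : IsWeakSolution K γ T f fin) :
    Measurable fun t : Icc 0 T => f t := by
  have (t : Icc 0 T) : IsFiniteMeasure (f t) := hf.isFiniteMeasure t.2
  refine measurable_of_forall_measurable_integral fun φ => ?_
  exact (hf.time_cont φ φ.continuous ⟨‖φ‖, φ.norm_coe_le_norm⟩).domRestrict.measurable

lemma stronglyMeasurable_coagulationForm (hK : IsDominatedKernel K (momentWeight γ) B)
    (hf : IsWeakSolution K γ T f fin) (hφ : Continuous φ) :
    StronglyMeasurable fun t : Icc 0 T => coagulationForm K φ (f t) := by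
  have (t : Icc 0 T) : IsFiniteMeasure (f t) := hf.isFiniteMeasure t.2
  set F : ℝ × ℝ → ℝ := (Ioi 0 ×ˢ Ioi 0).indicator (coagulationIntegrand K φ)
  have hF : StronglyMeasurable F := by
    have := (hK.continuousOn_coagulationIntegrand hφ).measurable_piecewise (g := 0)
      continuousOn_const (measurableSet_Ioi.prod measurableSet_Ioi)
    rw [piecewise_eq_indicator] at this
    exact this.stronglyMeasurable
  convert stronglyMeasurable_integral_prod_self hf.measurable_restrict hF using 2 with t
  exact integral_congr_ae ((ae_prod_pos (hf.ae_pos t.2)).mono fun p hp =>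
    (indicator_of_mem hp _).symm)

lemma integrableOn_coagulationForm (hK : IsDominatedKernel K (momentWeight γ) B)
    (hf : IsWeakSolution K γ T f fin) (hφ : IsTestFunction φ) :
    IntegrableOn (fun t => coagulationForm K φ (f t)) (Icc 0 T) := by
  obtain ⟨M, hM⟩ := hφ.exists_abs_le
  obtain ⟨C, hC⟩ := hf.exists_integral_momentWeight_le
  have hM_nonneg : 0 ≤ M := (abs_nonneg _).trans (hM 0)
  have hmeas : AEStronglyMeasurable (fun t => coagulationForm K φ (f t))
      (volume.restrict (Icc 0 T)) :=
    ((aemeasurable_restrict_iff_comap_subtype measurableSet_Icc).2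
      (hf.stronglyMeasurable_coagulationForm hK hφ.continuous).measurable.aemeasurable
      ).aestronglyMeasurable
  refine Integrable.of_bound hmeas (3 * M * B * C ^ 2) ?_
  filter_upwards [ae_restrict_mem measurableSet_Icc] with t ht
  have := hf.isFiniteMeasure ht
  have hB := hK.bound_nonneg
  refine (hK.abs_coagulationForm_le hM (hf.ae_pos ht) (hf.integrable_momentWeight ht)).trans ?_
  exact mul_le_mul_of_nonneg_left (pow_le_pow_left₀ (hC t ht).1 (hC t ht).2 2) (by positivity)

lemma integral_zero (hf : IsWeakSolution K γ T f fin) (hT : 0 ≤ T) (hφ : IsTestFunction φ) :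
    ∫ v, φ v ∂f 0 = ∫ v, φ v ∂fin := by
  have h := hf.weak_form φ hφ.continuous hφ.hasCompactSupport hφ.tsupport_subset 0
    (left_mem_Icc.2 hT)
  rwa [intervalIntegral.integral_same, mul_zero, sub_eq_zero] at h

lemma integral_sub_initial (hK : IsDominatedKernel K (momentWeight γ) B)
    (hf : IsWeakSolution K γ T f fin) (hφ : IsTestFunction φ) (ht : t ∈ Icc 0 T) :
    (∫ v, φ v ∂f t) - ∫ v, φ v ∂fin = ∫ r in (0 : ℝ)..t, 1 / 2 * coagulationForm K φ (f r) := by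
  obtain ⟨M, hM⟩ := hφ.exists_abs_le
  rw [hf.weak_form φ hφ.continuous hφ.hasCompactSupport hφ.tsupport_subset t ht,
    intervalIntegral.integral_const_mul]
  congr 1
  refine intervalIntegral.integral_congr fun r hr => ?_
  have hr' : r ∈ Icc 0 T := Icc_subset_Icc_right ht.2 (uIcc_of_le ht.1 ▸ hr)
  have := hf.isFiniteMeasure hr'
  exact (hK.coagulationForm_eq_integral_integral hφ.continuous hM (hf.ae_pos hr')
    (hf.integrable_momentWeight hr')).symm

lemma integral_sub (hK : IsDominatedKernel K (momentWeight γ) B)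
    (hf : IsWeakSolution K γ T f fin) (hφ : IsTestFunction φ) (hs : s ∈ Icc 0 T)
    (ht : t ∈ Icc 0 T) :
    (∫ v, φ v ∂f t) - ∫ v, φ v ∂f s = ∫ r in s..t, 1 / 2 * coagulationForm K φ (f r) := by
  have hint {r} (hr : r ∈ Icc 0 T) :
      IntervalIntegrable (fun r => 1 / 2 * coagulationForm K φ (f r)) volume 0 r :=
    (((hf.integrableOn_coagulationForm hK hφ).mono_set
      (uIcc_of_le hr.1 ▸ Icc_subset_Icc_right hr.2)).intervalIntegrable).const_mul _
  rw [← intervalIntegral.integral_interval_sub_left (hint ht) (hint hs),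
    ← hf.integral_sub_initial hK hφ ht, ← hf.integral_sub_initial hK hφ hs,
    sub_sub_sub_cancel_right]

lemma integral_pos_of_mul_le_gain (hK : IsDominatedKernel K (momentWeight γ) B)
    (hf : IsWeakSolution K γ T f fin) {a b : ℝ → ℝ} (hφ : IsTestFunction φ)
    (ha : IsTestFunction a) (hb : IsTestFunction b) (hφ_nonneg : 0 ≤ φ) (ha_nonneg : 0 ≤ a)
    (hb_nonneg : 0 ≤ b) (hgain : ∀ v v', 0 < v → 0 < v' → a v * b v' ≤ K v v' * φ (v + v'))
    (ha_fin : 0 < ∫ v, a v ∂fin) (hb_fin : 0 < ∫ v, b v ∂fin) (ht : t ∈ Ioc 0 T) :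
    0 < ∫ v, φ v ∂f t := by
  obtain ⟨D, hD, hloss⟩ := hK.exists_loss_le hφ hφ_nonneg
  obtain ⟨C, hC⟩ := hf.exists_integral_momentWeight_le
  have hsub : Icc 0 t ⊆ Icc 0 T := Icc_subset_Icc_right ht.2
  have hT : 0 ≤ T := ht.1.le.trans ht.2
  have hnonneg {ψ : ℝ → ℝ} (hψ : 0 ≤ ψ) (s : ℝ) : 0 ≤ ∫ v, ψ v ∂f s := integral_nonneg hψ
  refine pos_of_sub_mul_le_deriv (q := fun s => 1 / 2 * coagulationForm K φ (f s))
    (p := fun s => 1 / 2 * ((∫ v, a v ∂f s) * ∫ v, b v ∂f s)) (L := D * C) ht.1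
    ((hf.continuousOn_integral hφ).mono hsub) (fun s _ => hnonneg hφ_nonneg s)
    (((hf.integrableOn_coagulationForm hK hφ).mono_set hsub).const_mul _)
    (fun s hs => hf.integral_sub hK hφ (hsub hs) (Ioc_subset_Icc_self ht))
    ((((hf.continuousOn_integral ha).mul (hf.continuousOn_integral hb)).mono hsub).const_mul _)
    (fun s _ => mul_nonneg one_half_pos.le
      (mul_nonneg (hnonneg ha_nonneg s) (hnonneg hb_nonneg s))) ?_ fun s hs => ?_
  · rw [hf.integral_zero hT ha, hf.integral_zero hT hb]
    positivity
  · have hs' := hsub hs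
    have := hf.isFiniteMeasure hs'
    have hle := hK.le_coagulationForm (hf.ae_pos hs') (hf.integrable_momentWeight hs')
      (ha.integrable _) (hb.integrable _) hφ hgain hloss
    have hmoment : D * (∫ v, momentWeight γ v ∂f s) * (∫ v, φ v ∂f s) ≤ D * C * ∫ v, φ v ∂f s :=
      mul_le_mul_of_nonneg_right (mul_le_mul_of_nonneg_left (hC s hs').2 hD) (hnonneg hφ_nonneg s)
    linarith

lemma add_mem_support (hK : IsDominatedKernel K (momentWeight γ) B)
    (hf : IsWeakSolution K γ T f fin) [IsLocallyFiniteMeasure fin] {x y : ℝ} (hx : 0 < x)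
    (hy : 0 < y) (hx_mem : x ∈ fin.support) (hy_mem : y ∈ fin.support) (hKxy : 0 < K x y)
    (ht : t ∈ Ioc 0 T) : x + y ∈ (f t).support := by
  refine (Measure.mem_support_iff_forall _).2 fun U hU => ?_
  obtain ⟨φ, hφ, hφ_mem, hφU, hφxy⟩ := exists_isTestFunction (add_pos hx hy) hU
  have hφ_nonneg : 0 ≤ φ := fun v => (hφ_mem v).1
  obtain ⟨a, b, ha, hb, ha_nonneg, hb_nonneg, hax, hby, hgain⟩ :=
    hK.exists_mul_le_gain hφ hφ_nonneg hx hy hKxy (hφxy ▸ one_pos)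
  have hpos : 0 < ∫ v, φ v ∂f t :=
    hf.integral_pos_of_mul_le_gain hK hφ ha hb hφ_nonneg ha_nonneg hb_nonneg hgain
      (integral_pos_of_mem_support ha.continuous ha_nonneg (ha.integrable fin) hx_mem hax)
      (integral_pos_of_mem_support hb.continuous hb_nonneg (hb.integrable fin) hy_mem hby) ht
  have := hf.isFiniteMeasure (Ioc_subset_Icc_self ht)
  exact ((integral_pos_iff_support_of_nonneg hφ_nonneg (hφ.integrable (f t))).1 hpos).trans_le
    (measure_mono ((subset_tsupport φ).trans hφU))

end IsWeakSolution

theorem induction_basis_general {K : ℝ → ℝ → ℝ} {γ B T : ℝ} {f : ℝ → Measure ℝ}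
    {fin : Measure ℝ} [IsLocallyFiniteMeasure fin] (hK : IsDominatedKernel K (momentWeight γ) B)
    (hK_pos : ∀ v v', 0 < v → 0 < v' → v ≠ v' → 0 < K v v') (hf : IsWeakSolution K γ T f fin)
    {x₁ x₂ r₁ r₂ r : ℝ} (hr₁ : r₁ ≤ x₁) (hr₂ : r₂ ≤ x₂) (hsep : r₁ + r₂ ≤ dist x₁ x₂)
    (hr : r₁ + r₂ ≤ r) (hfin₁ : 0 < fin (Metric.ball x₁ r₁)) (hfin₂ : 0 < fin (Metric.ball x₂ r₂)) :
    ∀ t ∈ Ioc 0 T, ∃ C : ℝ, 0 < C ∧ ENNReal.ofReal C ≤ f t (Metric.ball (x₁ + x₂) r) := by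
  intro t ht
  obtain ⟨x, hx_ball, hx_mem⟩ := Measure.nonempty_inter_support_of_pos hfin₁
  obtain ⟨y, hy_ball, hy_mem⟩ := Measure.nonempty_inter_support_of_pos hfin₂
  have hx : 0 < x := by linarith [(abs_lt.1 (Metric.mem_ball.1 hx_ball)).1]
  have hy : 0 < y := by linarith [(abs_lt.1 (Metric.mem_ball.1 hy_ball)).1]
  have hne : x ≠ y := (Metric.ball_disjoint_ball hsep).ne_of_mem hx_ball hy_ball
  have hadd_ball : x + y ∈ Metric.ball (x₁ + x₂) r :=
    ((dist_add_add_le x y x₁ x₂).trans_lt (add_lt_add hx_ball hy_ball)).trans_le hr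
  have hadd_mem := hf.add_mem_support hK hx hy hx_mem hy_mem (hK_pos x y hx hy hne) ht
  have hpos := (Measure.mem_support_iff_forall _).1 hadd_mem _
    (Metric.isOpen_ball.mem_nhds hadd_ball)
  obtain ⟨C, -, hC, hCf⟩ := ENNReal.lt_iff_exists_real_btwn.1 hpos
  exact ⟨C, ENNReal.ofReal_pos.1 hC, hCf.le⟩

/-- **Induction basis.** If `f_in` charges the balls `B(x₁, η₀/2)` and
`B(x₂, η₀/2)` with `x₂ - x₁ ≥ 3η₀`, then for every `t ∈ (0,T]` the solution charges
the ball `B(x₁+x₂, 5η₀/2)` by a positive constant depending on `t, x₁, x₂, η₀`. -/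
theorem induction_basis
    (K h : ℝ → ℝ → ℝ) (g : ℝ → ℝ) (γ H H₀ H₁ G₀ G₁ k : ℝ)
    (hK : KernelAssumptionA K h g γ H H₀ H₁ G₀ G₁ k)
    (T : ℝ) (hT : 0 < T)
    (fin : Measure ℝ) (hconc : fin (Iic 0) = 0)
    (hγmom : Integrable (fun v => 1 + v ^ γ) fin)
    (f : ℝ → Measure ℝ) (hf : IsWeakSolution K γ T f fin)
    (hmc : IsMassConserving T f fin)
    (x₁ x₂ η₀ : ℝ) (hx₁ : 0 < x₁) (hx₁₂ : x₁ < x₂)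
    (hη₀ : η₀ ∈ Ioo 0 (min 1 x₁)) (hsep : 3 * η₀ ≤ x₂ - x₁)
    (hA : 0 < fin (Metric.ball x₁ (η₀ / 2)))
    (hB : 0 < fin (Metric.ball x₂ (η₀ / 2))) :
    ∀ t ∈ Ioc (0 : ℝ) T, ∃ C : ℝ, 0 < C ∧
      ENNReal.ofReal C ≤ f t (Metric.ball (x₁ + x₂) (5 * η₀ / 2)) := by
  have := isFiniteMeasure_of_integrable_momentWeight (ae_pos_of_measure_Iic_eq_zero hconc) hγmom
  obtain ⟨hη₀_pos, hη₀_lt⟩ : 0 < η₀ ∧ η₀ < x₁ := ⟨hη₀.1, hη₀.2.trans_le (min_le_right 1 x₁)⟩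
  exact induction_basis_general hK.isDominatedKernel (fun _ _ => hK.pos_of_ne) hf (by linarith)
    (by linarith) (by rw [dist_comm, Real.dist_eq]; linarith [le_abs_self (x₂ - x₁)])
    (by linarith) hA hB
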